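/- Let (W, S) be an arbitrary Coxeter system, let s, t ∈ S with m(s,t) ≥ 3, and let u ∈ W_c be fully commutative with a reduced factorization u = s·t·u′ (so ℓ(u) = ℓ(u′) + 2). If a ∈ S satisfies a ≠ s and m(a,t) ≥ 3, then ℓ(au) > ℓ(u), i.e. a ∉ 𝓛(u). -/

import Mathlib

open CoxeterSystem

variable {B W : Type*} [Group W] {M : CoxeterMatrix B} (cs : CoxeterSystem M W)

/-- `m(s,t) ≥ 3`: `s` and `t` are distinct noncommuting generators
(`M s t = 0` encodes `m(s,t) = ∞`). -/
def Noncomm (M : CoxeterMatrix B) (s t : B) : Prop := M s t = 0 ∨ 3 ≤ M s t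

/-- The longest element `w_{st}` of the rank-2 parabolic subgroup `⟨s,t⟩`
(meaningful when `3 ≤ M s t < ∞`). -/
def longest (s t : B) : W := cs.wordProd (alternatingWord s t (M s t))

/-- `w` is complex: it admits a reduced factorization `x₁ · w_{st} · x₂` where `w_{st}`
is the longest element of a rank-2 parabolic subgroup `⟨s,t⟩` with `3 ≤ m(s,t) < ∞`. -/
def IsComplex (w : W) : Prop :=
  ∃ s t : B, 3 ≤ M s t ∧ ∃ x₁ x₂ : W,
    w = x₁ * longest cs s t * x₂ ∧
    cs.length w = cs.length x₁ + cs.length (longest cs s t : W) + cs.length x₂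

/-- `w` is fully commutative, i.e. `w ∈ W_c`. -/
def FullyComm (w : W) : Prop := ¬ IsComplex cs w

/-- `x` is weakly complex: `x` is complex and `x = s·u` reduced with `u` fully commutative. -/
def IsWeaklyComplex (x : W) : Prop :=
  IsComplex cs x ∧ ∃ (s : B) (u : W), FullyComm cs u ∧ x = cs.simple s * u ∧
    cs.length x = 1 + cs.length u

/-- The alternating product `t s t s ⋯` with `k` factors, beginning with `t`. -/
def altProd (t s : B) (k : ℕ) : W :=
  cs.wordProd ((List.range k).map (fun i => if i % 2 = 0 then t else s))

/-- The left descent set `𝓛(w)`. -/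
def leftDescents (w : W) : Set B := {i | cs.IsLeftDescent w i}

/-- The right descent set `𝓡(w)`. -/
def rightDescents (w : W) : Set B := {i | cs.IsRightDescent w i}

/-- `w` is a reduced product of distinct pairwise commuting generators. -/
def IsCommProd (w : W) : Prop :=
  ∃ l : List B, l.Nodup ∧ (∀ u ∈ l, ∀ u' ∈ l, u ≠ u' → M u u' = 2) ∧
    cs.IsReduced l ∧ w = cs.wordProd l

/-- `y` is left star reducible to `x` with respect to the pair `{s,t}`:
`x` and `y` lie in the same left `{s,t}`-string and `ℓ(x) = ℓ(y) − 1`. -/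
def LeftStarReducible (s t : B) (y x : W) : Prop :=
  Noncomm M s t ∧
  ((cs.IsLeftDescent y s ∧ ¬ cs.IsLeftDescent y t ∧ x = cs.simple s * y ∧
      cs.IsLeftDescent x t) ∨
   (cs.IsLeftDescent y t ∧ ¬ cs.IsLeftDescent y s ∧ x = cs.simple t * y ∧
      cs.IsLeftDescent x s))

/-- `y` is right star reducible to `x` with respect to the pair `{s,t}`. -/
def RightStarReducible (s t : B) (y x : W) : Prop :=
  Noncomm M s t ∧
  ((cs.IsRightDescent y s ∧ ¬ cs.IsRightDescent y t ∧ x = y * cs.simple s ∧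
      cs.IsRightDescent x t) ∨
   (cs.IsRightDescent y t ∧ ¬ cs.IsRightDescent y s ∧ x = y * cs.simple t ∧
      cs.IsRightDescent x s))

/-- `y` is star reducible to `x`: there is a (possibly empty) chain of left and right
star reductions from `y` to `x`. -/
def StarReducible (y x : W) : Prop :=
  Relation.ReflTransGen
    (fun a b => ∃ s t : B, LeftStarReducible cs s t a b ∨ RightStarReducible cs s t a b) y x

/-- Property F: every fully commutative element is star reducible to a reduced product of
distinct pairwise commuting generators. -/
def PropertyF : Prop := ∀ w : W, FullyComm cs w → ∃ x : W, StarReducible cs w x ∧ IsCommProd cs x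

/-- `n(w)`: the maximum `k` such that `w` admits a reduced factorization `w = w₁·w₂·w₃`
with `w₂` a reduced product of `k` distinct pairwise commuting generators. -/
noncomputable def nval (w : W) : ℕ :=
  sSup {k | ∃ w₁ w₂ w₃ : W, w = w₁ * w₂ * w₃ ∧
    cs.length w = cs.length w₁ + cs.length w₂ + cs.length w₃ ∧
    IsCommProd cs w₂ ∧ cs.length w₂ = k}

/-- The Bruhat order: `x ≤ w` iff some reduced word for `w` has a subword that is a
reduced word for `x`. -/
def BruhatLE (x w : W) : Prop :=
  ∃ l l' : List B, cs.IsReduced l ∧ cs.wordProd l = w ∧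
    l'.Sublist l ∧ cs.IsReduced l' ∧ cs.wordProd l' = x

/-- `w = wI · wII` is the coset decomposition of `w` with respect to `I = {s,t}`:
`wI ∈ W_I`, `𝓛(wII) ∩ I = ∅` and `ℓ(w) = ℓ(wI) + ℓ(wII)`. -/
def CosetDecompL (s t : B) (w wI wII : W) : Prop :=
  w = wI * wII ∧ wI ∈ Subgroup.closure {cs.simple s, cs.simple t} ∧
  ¬ cs.IsLeftDescent wII s ∧ ¬ cs.IsLeftDescent wII t ∧
  cs.length w = cs.length wI + cs.length wII

/-- `w = wII · wI` is the right coset decomposition of `w` with respect to `I = {s,t}`: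
`wI ∈ W_I`, `𝓡(wII) ∩ I = ∅` and `ℓ(w) = ℓ(wII) + ℓ(wI)`. -/
def CosetDecompR (s t : B) (w wII wI : W) : Prop :=
  w = wII * wI ∧ wI ∈ Subgroup.closure {cs.simple s, cs.simple t} ∧
  ¬ cs.IsRightDescent wII s ∧ ¬ cs.IsRightDescent wII t ∧
  cs.length w = cs.length wII + cs.length wI

/-- `k_ε(J) = (−1)^{|J ∩ ε⁻¹(0)|}` for a set `J` of generators. -/
noncomputable def kSet (ε : B → Bool) (J : Set B) : ℤ :=
  (-1) ^ (J ∩ {i | ε i = false}).ncard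

/-- `k_ε(w) = k_ε(𝓛(w)) · k_ε(𝓡(w))`. -/
noncomputable def kElt (ε : B → Bool) (w : W) : ℤ :=
  kSet ε (leftDescents cs w) * kSet ε (rightDescents cs w)

/-!
If `a` were a left descent of `u`, then `u` would have the two distinct left descents `a` and `s`,
so by the exchange condition `u` would have a reduced word starting with `s·a`, and `a` would be a
left descent of `su`. But `t` is also a left descent of `su = t·u′`, and an element with the two
left descents `a` and `t` has a reduced factorization starting with the longest element of `⟨a, t⟩`.
Since `m(a,t) ≥ 3`, this makes `su`, and hence `u`, complex.

The exchange condition and the reducedness of alternating words both rest on the criterion that a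
word is reduced as soon as its right inversion sequence has no repetitions. For alternating words
the absence of repetitions amounts to `st` having order exactly `m(s,t)`, which is visible in the
geometric representation.
-/

section ReflectionPairs

open Module Polynomial.Chebyshev

section CommRing

variable {R E : Type*} [CommRing R] [AddCommGroup E] [Module R E] {x y : E} {f g : Dual R E}
  (hf : f x = 2) (hg : g y = 2)

theorem orderOf_reflection_mul_reflection_of_eq_zero [CharZero R] (hfy : f y = 0) (hgx : g x = 0) :
    orderOf (reflection hf * reflection hg) = 2 := by
  refine orderOf_eq_prime ?_ fun h => ?_
  · ext1 z
    simp only [pow_two, LinearEquiv.mul_apply, reflection_apply, map_sub, map_smul, hf, hg, hfy,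
      hgx, LinearEquiv.coe_one, id]
    module
  · have hx : (reflection hf * reflection hg) x = -x := by
      simp only [LinearEquiv.mul_apply, reflection_apply, hgx, hf, map_sub, map_smul]
      module
    have hfx : f x = f (-x) := by rw [← hx, h]; rfl
    rw [map_neg, hf] at hfx
    norm_num at hfx

theorem chebyshevS_eval_of_reflection_mul_reflection_pow_eq_one [IsDomain R]
    (hxy : LinearIndependent R ![x, y]) (hgx : g x ≠ 0) {k : ℕ}
    (hk : (reflection hf * reflection hg) ^ k = 1) :
    (S R k).eval (f y * g x - 2) = 1 ∧ (S R (k - 1)).eval (f y * g x - 2) = 0 := by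
  have happly := reflection_mul_reflection_pow_apply_self hf hg k
  rw [hk, LinearEquiv.coe_one, id] at happly
  obtain ⟨hx, hy⟩ := LinearIndependent.pair_iff.1 hxy
    ((S R k).eval (f y * g x - 2) + (S R (k - 1)).eval (f y * g x - 2) - 1)
    ((S R (k - 1)).eval (f y * g x - 2) * -g x)
    (by rw [sub_smul, one_smul, sub_add_eq_add_sub, ← happly, sub_self])
  have hzero := (mul_eq_zero.1 hy).resolve_right (neg_ne_zero.2 hgx)
  rw [hzero, add_zero, sub_eq_zero] at hx
  exact ⟨hx, hzero⟩

theorem orderOf_reflection_mul_reflection_of_mul_eq_four [IsDomain R] [CharZero R]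
    (hxy : LinearIndependent R ![x, y]) (hfg : f y * g x = 4) :
    orderOf (reflection hf * reflection hg) = 0 := by
  have hgx : g x ≠ 0 := by
    rintro h
    norm_num [h] at hfg
  have hzero := (chebyshevS_eval_of_reflection_mul_reflection_pow_eq_one hf hg hxy hgx
    (pow_orderOf_eq_one _)).2
  rw [hfg, show (4 - 2 : R) = 2 by norm_num, S_eval_two] at hzero
  simpa using hzero

end CommRing

open Real

theorem sin_two_mul_pi_div_ne_zero {m : ℕ} (hm : 3 ≤ m) : sin (2 * (π / m)) ≠ 0 := by
  have hm' : (3 : ℝ) ≤ m := by exact_mod_cast hm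
  refine (sin_pos_of_pos_of_lt_pi (by positivity) ?_).ne'
  rw [← mul_div_assoc, div_lt_iff₀ (by positivity)]
  nlinarith [pi_pos]

theorem two_mul_cos_two_mul_eq_sub_two {c θ : ℝ} (h : c = 4 * cos θ ^ 2) :
    2 * cos (2 * θ) = c - 2 := by
  rw [h, cos_two_mul]
  ring

theorem chebyshevS_eval_two_mul_cos {θ : ℝ} (hθ : sin θ ≠ 0) (n : ℤ) :
    (S ℝ n).eval (2 * cos θ) = sin ((n + 1) * θ) / sin θ :=
  (eq_div_iff hθ).2 (S_two_mul_real_cos θ n)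

theorem dvd_of_chebyshevS_eval_two_mul_cos {m k : ℕ} (hm : 3 ≤ m)
    (hone : (S ℝ k).eval (2 * cos (2 * (π / m))) = 1)
    (hzero : (S ℝ (k - 1)).eval (2 * cos (2 * (π / m))) = 0) : m ∣ k := by
  have hsin := sin_two_mul_pi_div_ne_zero hm
  have hsin_k : sin (k * (2 * (π / m))) = 0 := by
    have h := S_two_mul_real_cos (2 * (π / m)) (k - 1)
    rw [hzero, zero_mul] at h
    simpa using h.symm
  have hcos_k : cos (k * (2 * (π / m))) = 1 := by
    have h := S_two_mul_real_cos (2 * (π / m)) k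
    rw [hone, Int.cast_natCast, add_mul, one_mul, one_mul, sin_add, hsin_k, zero_mul,
      zero_add] at h
    exact mul_right_cancel₀ hsin (by rw [← h, one_mul])
  obtain ⟨n, hn⟩ := (cos_eq_one_iff _).1 hcos_k
  have hm0 : (m : ℝ) ≠ 0 := by positivity
  have hnk : (k : ℝ) = m * n := by
    field_simp at hn
    linarith
  exact Int.natCast_dvd_natCast.1 ⟨n, by exact_mod_cast hnk⟩

variable {E : Type*} [AddCommGroup E] [Module ℝ E] {x y : E} {f g : Dual ℝ E} (hf : f x = 2)
  (hg : g y = 2)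

theorem reflection_mul_reflection_pow_eq_one {m : ℕ} (hm : 3 ≤ m)
    (hfg : f y * g x = 4 * cos (π / m) ^ 2) : (reflection hf * reflection hg) ^ m = 1 := by
  have hS := chebyshevS_eval_two_mul_cos (sin_two_mul_pi_div_ne_zero hm)
  have hm0 : (m : ℝ) ≠ 0 := by positivity
  ext1 z
  rw [reflection_mul_reflection_pow_apply hf hg m z _ (two_mul_cos_two_mul_eq_sub_two hfg)]
  obtain ⟨k, hk | hk⟩ := Nat.even_or_odd' m
  · have hzero : (S ℝ (k - 1)).eval (2 * cos (2 * (π / m))) = 0 := by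
      have hangle : (((k - 1 : ℤ) : ℝ) + 1) * (2 * (π / m)) = π := by
        have : (m : ℝ) = 2 * k := by exact_mod_cast hk
        push_cast
        field_simp
        linarith
      rw [hS, hangle, sin_pi, zero_div]
    rw [show ((m : ℤ) - 2) / 2 = k - 1 by omega, show ((m : ℤ) - 1) / 2 = k - 1 by omega, hzero]
    simp
  · have hzero : (S ℝ k).eval (2 * cos (2 * (π / m))) +
        (S ℝ (k - 1)).eval (2 * cos (2 * (π / m))) = 0 := by
      have hangle : (((k : ℤ) : ℝ) + 1) * (2 * (π / m)) =
          2 * π - (((k - 1 : ℤ) : ℝ) + 1) * (2 * (π / m)) := by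
        have : (m : ℝ) = 2 * k + 1 := by exact_mod_cast hk
        push_cast
        field_simp
        linarith
      rw [hS, hS, ← add_div, hangle, sin_two_pi_sub, neg_add_cancel, zero_div]
    rw [show ((m : ℤ) - 1) / 2 = k by omega, show ((m : ℤ) - 3) / 2 = k - 1 by omega,
      show (m : ℤ) / 2 = k by omega, show ((m : ℤ) - 2) / 2 = k - 1 by omega, hzero]
    simp

theorem orderOf_reflection_mul_reflection (hxy : LinearIndependent ℝ ![x, y]) {m : ℕ}
    (hm : 3 ≤ m) (hfg : f y * g x = 4 * cos (π / m) ^ 2) :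
    orderOf (reflection hf * reflection hg) = m := by
  refine Nat.dvd_antisymm
    (orderOf_dvd_of_pow_eq_one (reflection_mul_reflection_pow_eq_one hf hg hm hfg)) ?_
  have hgx : g x ≠ 0 := by
    intro hgx
    have hcos : cos (π / m) = 0 := by simpa [hgx] using hfg
    exact sin_two_mul_pi_div_ne_zero hm (by rw [sin_two_mul, hcos, mul_zero])
  obtain ⟨hone, hzero⟩ := chebyshevS_eval_of_reflection_mul_reflection_pow_eq_one hf hg hxy hgx
    (pow_orderOf_eq_one _)
  rw [← two_mul_cos_two_mul_eq_sub_two hfg] at hone hzero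
  exact dvd_of_chebyshevS_eval_two_mul_cos hm hone hzero

end ReflectionPairs

section GeometricRepresentation

open Module Real

/-- The simple coroot `v ↦ 2⟨αᵢ, v⟩` of the geometric representation of a Coxeter group on
`B →₀ ℝ`, where `⟨αᵢ, αⱼ⟩ = -cos (π / m(i,j))`. For `m(i,j) = ∞`, encoded as `M i j = 0`, the
convention `π / 0 = 0` yields the desired value `⟨αᵢ, αⱼ⟩ = -1`. -/
noncomputable def geomCoroot (M : CoxeterMatrix B) (i : B) : Dual ℝ (B →₀ ℝ) :=
  Finsupp.linearCombination ℝ fun j => -(2 * cos (π / M i j))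

theorem geomCoroot_single (M : CoxeterMatrix B) (i j : B) :
    geomCoroot M i (Finsupp.single j 1) = -(2 * cos (π / M i j)) := by
  simp [geomCoroot]

theorem geomCoroot_single_self (M : CoxeterMatrix B) (i : B) :
    geomCoroot M i (Finsupp.single i 1) = 2 := by
  simp [geomCoroot_single]

/-- The simple reflection `v ↦ v - 2⟨αᵢ, v⟩ αᵢ` of the geometric representation, by which the
generator `i` of the Coxeter group acts. -/
noncomputable def geomReflection (M : CoxeterMatrix B) (i : B) : (B →₀ ℝ) ≃ₗ[ℝ] (B →₀ ℝ) :=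
  reflection (geomCoroot_single_self M i)

theorem geomCoroot_mul_geomCoroot (M : CoxeterMatrix B) (i j : B) :
    geomCoroot M i (Finsupp.single j 1) * geomCoroot M j (Finsupp.single i 1) =
      4 * cos (π / M i j) ^ 2 := by
  rw [geomCoroot_single, geomCoroot_single, M.symmetric j i]
  ring

theorem orderOf_geomReflection_mul_geomReflection (M : CoxeterMatrix B) (i j : B) :
    orderOf (geomReflection M i * geomReflection M j) = M i j := by
  rcases eq_or_ne i j with rfl | hij
  · rw [M.diagonal, orderOf_eq_one_iff]
    ext1 v
    exact involutive_reflection (geomCoroot_single_self M i) v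
  have hindep : LinearIndependent ℝ ![Finsupp.single i (1 : ℝ), Finsupp.single j 1] := by
    convert (Finsupp.linearIndependent_single_one ℝ B).comp ![i, j] (by simpa) using 1
    simp [← List.ofFn_inj]
  have hmul := geomCoroot_mul_geomCoroot M i j
  obtain h0 | h2 | h3 : M i j = 0 ∨ M i j = 2 ∨ 3 ≤ M i j := by
    have := M.off_diagonal i j hij
    omega
  · rw [h0]
    exact orderOf_reflection_mul_reflection_of_mul_eq_four _ _ hindep (by simpa [h0] using hmul)
  · rw [h2]
    exact orderOf_reflection_mul_reflection_of_eq_zero _ _ (by simp [geomCoroot_single, h2])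
      (by simp [geomCoroot_single, M.symmetric j i, h2])
  · exact orderOf_reflection_mul_reflection _ _ hindep h3 hmul

theorem orderOf_simple_mul_simple (i j : B) :
    orderOf (cs.simple i * cs.simple j) = M i j := by
  have hlift : M.IsLiftable (geomReflection M) := fun i j =>
    orderOf_dvd_iff_pow_eq_one.1 (orderOf_geomReflection_mul_geomReflection M i j).dvd
  refine Nat.dvd_antisymm (orderOf_dvd_of_pow_eq_one (cs.simple_mul_simple_pow i j)) ?_
  have hmap := orderOf_map_dvd (cs.lift ⟨_, hlift⟩) (cs.simple i * cs.simple j)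
  rwa [map_mul, cs.lift_apply_simple, cs.lift_apply_simple,
    orderOf_geomReflection_mul_geomReflection] at hmap

end GeometricRepresentation

section InversionSequences

theorem prod_map_alternatingWord {G : Type*} [Monoid G] (f : B → G) (i j : B) (k : ℕ) :
    ((alternatingWord i j (2 * k)).map f).prod = (f i * f j) ^ k := by
  induction k with
  | zero => simp [alternatingWord]
  | succ k ih =>
    rw [Nat.mul_succ, alternatingWord_succ', alternatingWord_succ']
    simp [ih, pow_succ', mul_assoc]

theorem rightInvSeq_alternatingWord (i j : B) (k : ℕ) :
    cs.rightInvSeq (alternatingWord i j k) =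
      ((List.range k).map fun l => (cs.simple j * cs.simple i) ^ l * cs.simple j).reverse := by
  induction k generalizing i j with
  | zero => rfl
  | succ k ih =>
    have hconj (l : ℕ) : cs.simple j * ((cs.simple i * cs.simple j) ^ l * cs.simple i) *
        cs.simple j = (cs.simple j * cs.simple i) ^ (l + 1) * cs.simple j := by
      rw [mul_pow_mul, pow_succ', mul_assoc (cs.simple j) (cs.simple i)]
    rw [alternatingWord_succ, cs.rightInvSeq_concat, ih, List.range_succ_eq_map]
    simp [Function.comp_def, hconj]

open Classical in
theorem even_count_rightInvSeq_alternatingWord (i j : B) (r : W) :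
    Even ((cs.rightInvSeq (alternatingWord i j (2 * M i j))).count r) := by
  rw [rightInvSeq_alternatingWord, List.count_reverse, two_mul, List.range_add, List.map_append,
    List.map_map, List.count_append]
  simp [Function.comp_def, pow_add]

open Classical in
/-- The permutation `(r, e) ↦ (sᵢ r sᵢ, e + δ_{r, sᵢ})` of `W × ZMod 2`. Restricted to reflections
`r`, this is the action of `sᵢ` on the roots, with `ZMod 2` recording the sign of a root. -/
noncomputable def signedConj (i : B) : Function.End (W × ZMod 2) := fun p =>
  (cs.simple i * p.1 * cs.simple i, p.2 + if p.1 = cs.simple i then 1 else 0)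

open Classical in
theorem prod_map_signedConj_apply (ω : List B) (r : W) (e : ZMod 2) :
    (ω.map (signedConj cs)).prod (r, e) =
      (cs.wordProd ω * r * (cs.wordProd ω)⁻¹, e + (cs.rightInvSeq ω).count r) := by
  induction ω with
  | nil => simp [Function.End.one_def]
  | cons i ω ih =>
    have hiff : cs.wordProd ω * r * (cs.wordProd ω)⁻¹ = cs.simple i ↔
        (cs.wordProd ω)⁻¹ * cs.simple i * cs.wordProd ω = r := by
      rw [mul_inv_eq_iff_eq_mul, ← eq_inv_mul_iff_mul_eq, eq_comm, mul_assoc]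
    rw [List.map_cons, List.prod_cons]
    change signedConj cs i ((ω.map (signedConj cs)).prod (r, e)) = _
    rw [ih]
    simp only [signedConj, hiff]
    simp [CoxeterSystem.rightInvSeq, List.count_cons, cs.wordProd_cons, mul_assoc, add_assoc]

theorem isLiftable_signedConj : M.IsLiftable (signedConj cs) := by
  classical
  intro i j
  have hone : cs.wordProd (alternatingWord i j (2 * M i j)) = 1 :=
    (prod_map_alternatingWord _ i j _).trans (cs.simple_mul_simple_pow i j)
  rw [← prod_map_alternatingWord]
  funext ⟨r, e⟩
  rw [prod_map_signedConj_apply, hone,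
    (even_count_rightInvSeq_alternatingWord cs i j r).natCast_zmod_two]
  simp [Function.End.one_def]

open Classical in
theorem count_rightInvSeq_modEq {ω ω' : List B} (h : cs.wordProd ω = cs.wordProd ω') (r : W) :
    (cs.rightInvSeq ω).count r ≡ (cs.rightInvSeq ω').count r [MOD 2] := by
  have hlift (ω : List B) : cs.lift ⟨_, isLiftable_signedConj cs⟩ (cs.wordProd ω) =
      (ω.map (signedConj cs)).prod := by
    rw [CoxeterSystem.wordProd, map_list_prod, List.map_map]
    congr 2
    funext i
    exact cs.lift_apply_simple _ i
  have happly := congrArg (fun w => cs.lift ⟨_, isLiftable_signedConj cs⟩ w (r, 0)) h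
  simp only [hlift, prod_map_signedConj_apply, zero_add] at happly
  exact (ZMod.natCast_eq_natCast_iff _ _ 2).1 (congrArg Prod.snd happly)

theorem isReduced_of_nodup_rightInvSeq {ω : List B} (hω : (cs.rightInvSeq ω).Nodup) :
    cs.IsReduced ω := by
  classical
  obtain ⟨ρ, hρ, hωρ⟩ := cs.exists_isReduced (cs.wordProd ω)
  have hperm : (cs.rightInvSeq ω).Perm (cs.rightInvSeq ρ) := List.perm_iff_count.2 fun r => by
    have hω_le := List.nodup_iff_count_le_one.1 hω r
    have hρ_le := List.nodup_iff_count_le_one.1 hρ.nodup_rightInvSeq r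
    exact (count_rightInvSeq_modEq cs hωρ r).eq_of_lt_of_lt (by omega) (by omega)
  have hlen := hperm.length_eq
  rw [cs.length_rightInvSeq, cs.length_rightInvSeq] at hlen
  rw [CoxeterSystem.IsReduced, hωρ, hρ.eq, hlen]

theorem isReduced_alternatingWord (i j : B) {k : ℕ} (hk : M i j = 0 ∨ k ≤ M i j) :
    cs.IsReduced (alternatingWord i j k) := by
  apply isReduced_of_nodup_rightInvSeq
  rw [rightInvSeq_alternatingWord, List.nodup_reverse]
  refine List.nodup_range.map_on fun a ha b hb hab => ?_
  rw [List.mem_range] at ha hb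
  have hmod := pow_eq_pow_iff_modEq.1 (mul_right_cancel hab)
  rw [orderOf_simple_mul_simple, M.symmetric j i] at hmod
  rcases hk with h0 | hk
  · rwa [h0, Nat.modEq_zero_iff] at hmod
  · exact hmod.eq_of_lt_of_lt (by omega) (by omega)

theorem length_longest (s t : B) : cs.length (longest cs s t) = M s t := by
  rw [longest, (isReduced_alternatingWord cs s t (.inr le_rfl)).eq, length_alternatingWord]

end InversionSequences

section Exchange

theorem exists_wordProd_eraseIdx_eq_simple_mul {ω : List B} (hω : cs.IsReduced ω) {i : B}
    (hi : cs.IsLeftDescent (cs.wordProd ω) i) :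
    ∃ j < ω.length, cs.wordProd (ω.eraseIdx j) = cs.simple i * cs.wordProd ω := by
  have hcons : ¬ cs.IsReduced (i :: ω) := by
    rw [CoxeterSystem.IsReduced, cs.wordProd_cons, List.length_cons, ← hω.eq]
    rw [CoxeterSystem.IsLeftDescent] at hi
    omega
  have hmem : (cs.wordProd ω)⁻¹ * cs.simple i * cs.wordProd ω ∈ cs.rightInvSeq ω := by
    by_contra hmem
    exact hcons (isReduced_of_nodup_rightInvSeq cs (hω.nodup_rightInvSeq.cons hmem))
  obtain ⟨j, hj, hji⟩ := List.mem_iff_getElem.1 hmem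
  refine ⟨j, by simpa using hj, ?_⟩
  rw [← cs.wordProd_mul_getD_rightInvSeq, List.getD_eq_getElem _ _ hj, hji, mul_assoc,
    mul_inv_cancel_left]

theorem exists_eq_wordProd_cons_mul {ω : List B} {i : B} (hcons : cs.IsReduced (i :: ω)) {w x : W}
    (hi : cs.IsLeftDescent w i) (hw : w = cs.wordProd ω * x)
    (hlen : cs.length w = ω.length + cs.length x) :
    ∃ x', w = cs.wordProd (i :: ω) * x' ∧ cs.length w = (i :: ω).length + cs.length x' := by
  obtain ⟨ρ, hρ, rfl⟩ := cs.exists_isReduced x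
  rw [hρ.eq] at hlen
  rw [← cs.wordProd_append] at hw
  have happend : cs.IsReduced (ω ++ ρ) := by
    rw [CoxeterSystem.IsReduced, ← hw, hlen, List.length_append]
  obtain ⟨j, hj, herase⟩ := exists_wordProd_eraseIdx_eq_simple_mul cs happend (hw ▸ hi)
  rcases lt_or_ge j ω.length with hjω | hωj
  -- Erasing a letter of `ω` would express `sᵢ · π ω` by a word shorter than `i :: ω`.
  · rw [List.eraseIdx_append_of_lt_length hjω, cs.wordProd_append, cs.wordProd_append, ← mul_assoc,
      ← cs.wordProd_cons, mul_left_inj] at herase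
    have hle := cs.length_wordProd_le (ω.eraseIdx j)
    rw [herase, hcons.eq, List.length_eraseIdx_of_lt hjω, List.length_cons] at hle
    omega
  · rw [List.eraseIdx_append_of_length_le hωj, cs.wordProd_append, ← hw] at herase
    have hfac : w = cs.wordProd (i :: ω) * cs.wordProd (ρ.eraseIdx (j - ω.length)) := by
      rw [cs.wordProd_cons, mul_assoc, herase, cs.simple_mul_simple_cancel_left]
    refine ⟨_, hfac, ?_⟩
    have hle := cs.length_mul_le (cs.wordProd (i :: ω)) (cs.wordProd (ρ.eraseIdx (j - ω.length)))
    have hle' := cs.length_wordProd_le (ρ.eraseIdx (j - ω.length))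
    rw [List.length_append] at hj
    rw [List.length_eraseIdx_of_lt (by omega)] at hle'
    rw [← hfac, hcons.eq] at hle
    rw [List.length_cons] at hle ⊢
    omega

theorem exists_eq_wordProd_alternatingWord_mul {s t : B} {w : W} (hs : cs.IsLeftDescent w s)
    (ht : cs.IsLeftDescent w t) {k : ℕ} (hk : M s t = 0 ∨ k ≤ M s t) :
    ∃ x, w = cs.wordProd (alternatingWord s t k) * x ∧ cs.length w = k + cs.length x := by
  induction k with
  | zero => exact ⟨w, by simp [alternatingWord]⟩
  | succ k ih =>
    obtain ⟨x, hw, hlen⟩ := ih (by omega)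
    have hred := isReduced_alternatingWord cs s t hk
    rw [alternatingWord_succ'] at hred ⊢
    have hdescent : cs.IsLeftDescent w (if Even k then t else s) := by split_ifs <;> assumption
    simpa using exists_eq_wordProd_cons_mul cs hred hdescent hw (by simpa using hlen)

theorem exists_eq_longest_mul {s t : B} {w : W} (hs : cs.IsLeftDescent w s)
    (ht : cs.IsLeftDescent w t) :
    M s t ≠ 0 ∧ ∃ x, w = longest cs s t * x ∧
      cs.length w = cs.length (longest cs s t) + cs.length x := by
  constructor
  · intro h
    obtain ⟨x, -, hlen⟩ :=
      exists_eq_wordProd_alternatingWord_mul cs hs ht (k := cs.length w + 1) (.inl h)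
    omega
  · rw [length_longest]
    exact exists_eq_wordProd_alternatingWord_mul cs hs ht (.inr le_rfl)

theorem isLeftDescent_simple_mul {s t : B} (hst : s ≠ t) {w : W} (hs : cs.IsLeftDescent w s)
    (ht : cs.IsLeftDescent w t) : cs.IsLeftDescent (cs.simple s * w) t := by
  have hM := M.off_diagonal s t hst
  obtain ⟨x, hw, hlen⟩ := exists_eq_wordProd_alternatingWord_mul cs hs ht (k := 2) (by omega)
  have hsw : cs.simple s * w = cs.simple t * x := by
    simp [hw, alternatingWord, cs.wordProd_cons, mul_assoc]
  have hs_len := cs.isLeftDescent_iff.1 hs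
  rw [CoxeterSystem.IsLeftDescent]
  nth_rw 1 [hsw]
  rw [cs.simple_mul_simple_cancel_left]
  omega

end Exchange

section FullyCommutative

variable {cs}

theorem IsComplex.mul_left {v w : W} (hw : IsComplex cs w)
    (hlen : cs.length (v * w) = cs.length v + cs.length w) : IsComplex cs (v * w) := by
  obtain ⟨s, t, hst, x₁, x₂, rfl, hx⟩ := hw
  refine ⟨s, t, hst, v * x₁, x₂, by simp only [mul_assoc], ?_⟩
  have h₁ := cs.length_mul_le (v * x₁ * longest cs s t) x₂
  have h₂ := cs.length_mul_le (v * x₁) (longest cs s t)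
  have h₃ := cs.length_mul_le v x₁
  simp only [mul_assoc] at h₁ h₂ h₃ hx hlen ⊢
  omega

theorem FullyComm.simple_mul {w : W} (hw : FullyComm cs w) {s : B} (hs : cs.IsLeftDescent w s) :
    FullyComm cs (cs.simple s * w) := by
  intro hsw
  apply hw
  rw [← cs.simple_mul_simple_cancel_left (w := w) s]
  apply hsw.mul_left
  rw [cs.simple_mul_simple_cancel_left, cs.length_simple, add_comm, cs.isLeftDescent_iff.1 hs]

theorem FullyComm.not_isLeftDescent {w : W} (hw : FullyComm cs w) {s t : B} (hst : Noncomm M s t)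
    (hs : cs.IsLeftDescent w s) : ¬ cs.IsLeftDescent w t := by
  intro ht
  obtain ⟨hfin, x, hx, hlen⟩ := exists_eq_longest_mul cs hs ht
  exact hw ⟨s, t, hst.resolve_left hfin, 1, x, by simpa using hx, by simpa using hlen⟩

end FullyCommutative

theorem statement14_general (s t : B) (u u' : W) (hu : FullyComm cs u)
    (hfac : u = cs.simple s * cs.simple t * u') (hred : cs.length u = cs.length u' + 2)
    (a : B) (has : a ≠ s) (hat : Noncomm M a t) :
    cs.length u < cs.length (cs.simple a * u) := by
  have hsu : cs.simple s * u = cs.simple t * u' := by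
    rw [hfac, mul_assoc, cs.simple_mul_simple_cancel_left]
  have hsu_le : cs.length (cs.simple s * u) ≤ cs.length u' + 1 := by
    rw [hsu]
    rcases cs.length_simple_mul u' t with h | h <;> omega
  have hs : cs.IsLeftDescent u s := by
    rw [CoxeterSystem.IsLeftDescent]
    omega
  have ht : cs.IsLeftDescent (cs.simple s * u) t := by
    have := cs.isLeftDescent_iff.1 hs
    rw [CoxeterSystem.IsLeftDescent, hsu, cs.simple_mul_simple_cancel_left, ← hsu]
    omega
  by_contra hlt
  have ha : cs.IsLeftDescent u a := lt_of_le_of_ne (not_lt.1 hlt) (cs.length_simple_mul_ne u a)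
  have hsa : cs.IsLeftDescent (cs.simple s * u) a := isLeftDescent_simple_mul cs has.symm hs ha
  exact (hu.simple_mul hs).not_isLeftDescent hat hsa ht

/-- Let `s, t ∈ S` with `m(s,t) ≥ 3` and let `u ∈ W_c` have a reduced factorization
`u = s·t·u′`.  If `a ∈ S` satisfies `a ≠ s` and `m(a,t) ≥ 3`, then `ℓ(au) > ℓ(u)`. -/
theorem statement14 (s t : B) (hst : Noncomm M s t) (u u' : W)
    (hu : FullyComm cs u) (hfac : u = cs.simple s * cs.simple t * u')
    (hred : cs.length u = cs.length u' + 2)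
    (a : B) (has : a ≠ s) (hat : Noncomm M a t) :
    cs.length u < cs.length (cs.simple a * u) :=
  statement14_general cs s t u u' hu hfac hred a has hat
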